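/- Let s, t >= 2 be integers and put l := lcm(s,t). The mix of H_s := [3,3,4,3]_{(s,0,0,0)} and H_t := [3,3,4,3]_{(t,0,0,0)} — i.e. the subgroup of H_s x H_t generated by the five pairs (pi_s(a), pi_t(a)), ..., (pi_s(e), pi_t(e)) — is isomorphic to [3,3,4,3]_{(l,0,0,0)}. -/

import Mathlib

/-- Coxeter matrix of the string diagram [3,3,4,3] on generators a,b,c,d,e = 0..4. -/
def cox5 : Fin 5 → Fin 5 → ℕ := fun i j =>
  if i = j then 1
  else if (i : ℕ) + 1 = (j : ℕ) ∨ (j : ℕ) + 1 = (i : ℕ) then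
    (if ((i : ℕ) = 2 ∧ (j : ℕ) = 3) ∨ ((i : ℕ) = 3 ∧ (j : ℕ) = 2) then 4 else 3)
  else 2

def rels5 : Set (FreeGroup (Fin 5)) :=
  Set.range fun p : Fin 5 × Fin 5 => (FreeGroup.of p.1 * FreeGroup.of p.2) ^ cox5 p.1 p.2

/-- The Coxeter group of type [3,3,4,3]. -/
abbrev W5 : Type := PresentedGroup rels5

def v (i : Fin 5) : W5 := PresentedGroup.of i

/-- sigma = d^(cb) = b*c*d*c*b. -/
def sg5 : W5 := v 1 * v 2 * v 3 * v 2 * v 1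
/-- tau = c^(de) = e*d*c*d*e. -/
def tu5 : W5 := v 4 * v 3 * v 2 * v 3 * v 4

/-- [3,3,4,3]_{(s,s,0,0)} : the quotient of [3,3,4,3] by the normal closure of (a σ τ)^{2s}. -/
abbrev Gq (s : ℕ) : Type := W5 ⧸ Subgroup.normalClosure ({(v 0 * sg5 * tu5) ^ (2 * s)} : Set W5)

/-- [3,3,4,3]_{(s,0,0,0)} : the quotient of [3,3,4,3] by the normal closure of (a σ τ σ)^s. -/
abbrev Hq (s : ℕ) : Type := W5 ⧸ Subgroup.normalClosure ({(v 0 * sg5 * tu5 * sg5) ^ s} : Set W5)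

/-- The quotient map W5 → [3,3,4,3]_{(s,s,0,0)}. -/
def piG (s : ℕ) : W5 →* Gq s := QuotientGroup.mk' _

/-- The quotient map W5 → [3,3,4,3]_{(s,0,0,0)}. -/
def piH (s : ℕ) : W5 →* Hq s := QuotientGroup.mk' _

/-- Letters to generators. -/
def gn : ℕ → W5
  | 0 => v 0
  | 1 => v 1
  | 2 => v 2
  | 3 => v 3
  | _ => v 4

/-- Evaluation of words. -/
def ev (w : List ℕ) : W5 := (w.map gn).prod

/-- Rewriting rules: cancellations and braid moves. -/
def rule : ℕ → List ℕ × List ℕ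
  | 0 => ([0, 0], [])
  | 1 => ([1, 1], [])
  | 2 => ([2, 2], [])
  | 3 => ([3, 3], [])
  | 4 => ([4, 4], [])
  | 5 => ([0, 1, 0], [1, 0, 1])
  | 6 => ([0, 2], [2, 0])
  | 7 => ([0, 3], [3, 0])
  | 8 => ([0, 4], [4, 0])
  | 9 => ([1, 0, 1], [0, 1, 0])
  | 10 => ([1, 2, 1], [2, 1, 2])
  | 11 => ([1, 3], [3, 1])
  | 12 => ([1, 4], [4, 1])
  | 13 => ([2, 0], [0, 2])
  | 14 => ([2, 1, 2], [1, 2, 1])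
  | 15 => ([2, 3, 2, 3], [3, 2, 3, 2])
  | 16 => ([2, 4], [4, 2])
  | 17 => ([3, 0], [0, 3])
  | 18 => ([3, 1], [1, 3])
  | 19 => ([3, 2, 3, 2], [2, 3, 2, 3])
  | 20 => ([3, 4, 3], [4, 3, 4])
  | 21 => ([4, 0], [0, 4])
  | 22 => ([4, 1], [1, 4])
  | 23 => ([4, 2], [2, 4])
  | 24 => ([4, 3, 4], [3, 4, 3])
  | _ => ([], [])

def step (p : ℕ × ℕ) (w : List ℕ) : List ℕ :=
  if (w.drop p.1).take (rule p.2).1.length = (rule p.2).1 then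
    w.take p.1 ++ ((rule p.2).2 ++ (w.drop p.1).drop (rule p.2).1.length)
  else w

def run : List (ℕ × ℕ) → List ℕ → List ℕ
  | [], w => w
  | p :: ps, w => run ps (step p w)

theorem v_rel (i j : Fin 5) : (v i * v j) ^ cox5 i j = 1 := by
  have h : (PresentedGroup.mk rels5) ((FreeGroup.of i * FreeGroup.of j) ^ cox5 i j) = 1 :=
    PresentedGroup.one_of_mem ⟨(i, j), rfl⟩
  rw [map_pow, map_mul] at h
  exact h

theorem v_sq (i : Fin 5) : v i * v i = 1 := by
  have h := v_rel i i
  simpa [cox5] using h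

theorem v_inv (i : Fin 5) : (v i)⁻¹ = v i := inv_eq_of_mul_eq_one_left (v_sq i)

theorem br2 {i j : Fin 5} (h : cox5 i j = 2) : v i * v j = v j * v i := by
  have h1 := v_rel i j
  rw [h, pow_two] at h1
  have h2 := eq_inv_of_mul_eq_one_left h1
  rw [h2, mul_inv_rev, v_inv, v_inv]

theorem br3 {i j : Fin 5} (h : cox5 i j = 3) : v i * (v j * v i) = v j * (v i * v j) := by
  have h1 := v_rel i j
  rw [h, pow_succ, pow_two] at h1
  have h3 : (v i * (v j * v i)) * (v j * (v i * v j)) = 1 := by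
    simpa only [mul_assoc] using h1
  rw [eq_inv_of_mul_eq_one_left h3]
  simp only [mul_inv_rev, v_inv, mul_assoc]

theorem br4 {i j : Fin 5} (h : cox5 i j = 4) :
    v i * (v j * (v i * v j)) = v j * (v i * (v j * v i)) := by
  have h1 := v_rel i j
  rw [h, pow_succ, pow_succ, pow_two] at h1
  have h3 : (v i * (v j * (v i * v j))) * (v i * (v j * (v i * v j))) = 1 := by
    simpa only [mul_assoc] using h1
  rw [eq_inv_of_mul_eq_one_left h3]
  simp only [mul_inv_rev, v_inv, mul_assoc]

theorem rule_sound (k : ℕ) : ev (rule k).1 = ev (rule k).2 := by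
  unfold rule
  split <;> simp only [ev, List.map_cons, List.map_nil, List.prod_cons, List.prod_nil, mul_one, gn]
    <;> first
      | exact v_sq _
      | exact br2 (by decide)
      | exact br3 (by decide)
      | exact br4 (by decide)

theorem ev_append (l r : List ℕ) : ev (l ++ r) = ev l * ev r := by
  simp [ev]

theorem step_sound (p : ℕ × ℕ) (w : List ℕ) : ev (step p w) = ev w := by
  unfold step
  split_ifs with h
  · rw [ev_append, ev_append, ← rule_sound, ← ev_append]
    conv_lhs => rw [← h]
    rw [h]
    conv_lhs => enter [2, 1, 1]; rw [← h]
    rw [List.take_append_drop, ← ev_append, List.take_append_drop]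
  · rfl

theorem run_sound (ps : List (ℕ × ℕ)) (w : List ℕ) : ev (run ps w) = ev w := by
  induction ps generalizing w with
  | nil => rfl
  | cons p ps ih => rw [run, ih, step_sound]

theorem run_one {ps : List (ℕ × ℕ)} {w : List ℕ} (h : run ps w = []) : ev w = 1 := by
  rw [← run_sound ps w, h]
  rfl

theorem cert_c1 : run [(0, 13), (1, 14), (3, 11), (4, 10), (6, 16), (7, 15), (10, 16), (11, 14),
    (13, 11), (14, 10), (16, 2), (15, 1), (14, 2), (13, 3), (12, 2), (11, 1), (10, 4), (9, 3),
    (8, 2), (7, 3), (6, 4), (5, 1), (4, 2), (3, 3), (2, 2), (1, 1), (0, 0)]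
      [2, 0, 1, 2, 3, 2, 1, 4, 3, 2, 3, 4, 1, 2, 3, 2, 1, 2, 1, 2, 3, 2, 1, 4, 3, 2, 3, 4, 1, 2,
      3, 2, 1, 0] = [] := by
  decide +kernel

theorem cert_d1 : run [(0, 17), (1, 18), (2, 19), (5, 18), (6, 20), (8, 23), (9, 24), (11, 18),
    (12, 19), (15, 18), (16, 3), (15, 1), (14, 2), (13, 3), (12, 2), (11, 1), (10, 4), (9, 3),
    (8, 2), (7, 3), (6, 4), (5, 1), (4, 2), (3, 3), (2, 2), (1, 1), (0, 0)]
      [3, 0, 1, 2, 3, 2, 1, 4, 3, 2, 3, 4, 1, 2, 3, 2, 1, 3, 1, 2, 3, 2, 1, 4, 3, 2, 3, 4, 1, 2,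
      3, 2, 1, 0] = [] := by
  decide +kernel

theorem cert_e1 : run [(11, 22), (12, 23), (10, 18), (6, 12), (7, 11), (8, 10), (5, 16), (0,
    21), (1, 22), (2, 23), (3, 24), (5, 19), (8, 18), (9, 19), (12, 20), (14, 23), (15, 22),
    (16, 4), (15, 1), (14, 2), (13, 3), (11, 16), (12, 2), (7, 14), (9, 11), (10, 12), (11, 1),
    (10, 4), (9, 3), (8, 2), (6, 18), (7, 3), (4, 23), (5, 22), (6, 4), (5, 1), (4, 2), (3, 3),
    (2, 2), (1, 1), (0, 0)]
      [4, 0, 1, 2, 3, 2, 1, 4, 3, 2, 3, 4, 1, 2, 3, 2, 1, 4, 1, 2, 3, 2, 1, 4, 3, 2, 3, 4, 1, 2,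
      3, 2, 1, 0] = [] := by
  decide +kernel

theorem cert_a2 : run [(0, 5), (2, 1), (15, 1), (15, 0), (14, 14), (16, 11), (13, 18), (11, 10),
    (13, 15), (16, 14), (18, 1), (17, 16), (15, 18), (10, 23), (11, 22), (7, 19), (10, 18), (11,
    20), (13, 23), (14, 22), (15, 24), (17, 19), (20, 3), (16, 23), (10, 12), (11, 11), (12,
    10), (9, 16), (6, 23), (7, 24), (9, 19), (12, 18), (13, 19), (16, 20), (18, 23), (19, 4),
    (11, 14), (13, 11), (10, 18), (4, 14), (6, 11), (7, 12), (8, 10), (10, 15), (13, 14), (15,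
    12), (16, 11), (17, 10), (19, 2), (14, 16), (12, 18), (7, 23), (8, 22), (3, 18), (4, 19),
    (7, 18), (8, 20), (10, 23), (11, 22), (12, 24), (14, 19), (17, 18), (18, 3), (11, 11), (12,
    12), (2, 14), (4, 11), (5, 10), (7, 16), (8, 15), (11, 16), (12, 14), (14, 11), (15, 10),
    (17, 2), (16, 1), (16, 1), (15, 2), (14, 3), (13, 2), (12, 1), (11, 4), (10, 3), (9, 2), (8,
    3), (7, 4), (6, 1), (5, 2), (4, 3), (3, 2), (2, 1), (1, 0), (0, 1)]
      [0, 1, 0, 1, 2, 3, 2, 1, 4, 3, 2, 3, 4, 1, 2, 3, 2, 1, 1, 0, 0, 1, 2, 3, 2, 1, 4, 3, 2, 3,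
      4, 1, 2, 3, 2, 1, 1, 1, 2, 3, 2, 1, 4, 3, 2, 3, 4, 1, 2, 3, 2, 1, 0, 1] = [] := by
  decide +kernel

theorem cert_comm : run [(15, 1), (30, 1), (14, 13), (15, 14), (17, 11), (18, 10), (20, 16),
    (21, 15), (24, 16), (25, 14), (27, 11), (28, 10), (30, 2), (13, 17), (14, 18), (15, 19),
    (18, 18), (19, 20), (21, 23), (22, 24), (24, 18), (25, 19), (28, 18), (29, 3), (12, 13),
    (13, 14), (15, 11), (16, 10), (18, 16), (19, 15), (22, 16), (23, 14), (25, 11), (26, 10),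
    (28, 2), (27, 1), (22, 22), (23, 23), (21, 18), (17, 12), (18, 11), (19, 10), (16, 16), (10,
    22), (11, 21), (12, 22), (13, 23), (14, 24), (16, 19), (19, 18), (20, 19), (23, 20), (25,
    23), (26, 4), (22, 16), (15, 23), (9, 18), (10, 17), (11, 18), (12, 19), (15, 20), (17, 23),
    (18, 22), (19, 23), (20, 24), (22, 19), (25, 3), (24, 2), (23, 3), (21, 23), (22, 4), (17,
    14), (19, 11), (16, 18), (14, 16), (5, 12), (6, 11), (7, 10), (9, 13), (10, 14), (12, 11),
    (13, 12), (14, 10), (16, 15), (19, 14), (21, 1), (20, 2), (18, 18), (19, 3), (15, 11), (16,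
    10), (18, 2), (17, 1), (8, 9), (10, 6), (11, 7), (12, 8), (13, 6), (14, 7), (15, 6), (16,
    0), (16, 1), (15, 2), (14, 3), (13, 2), (7, 13), (8, 14), (10, 11), (11, 12), (12, 1), (11,
    4), (10, 3), (9, 2), (6, 17), (7, 18), (8, 3), (5, 21), (6, 22), (7, 4), (6, 1), (4, 13),
    (5, 2), (3, 17), (4, 3), (2, 13), (3, 2), (0, 5), (2, 1), (1, 0), (0, 1)]
      [0, 1, 2, 3, 2, 1, 4, 3, 2, 3, 4, 1, 2, 3, 2, 1, 1, 0, 1, 2, 3, 2, 1, 4, 3, 2, 3, 4, 1, 2,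
      3, 2, 1, 1, 1, 2, 3, 2, 1, 4, 3, 2, 3, 4, 1, 2, 3, 2, 1, 0, 1, 1, 2, 3, 2, 1, 4, 3, 2, 3,
      4, 1, 2, 3, 2, 1, 0, 1] = [] := by
  decide +kernel

theorem cert_c4 : run [(19, 1), (18, 2), (17, 3), (16, 2), (15, 1), (20, 12), (21, 11), (19,
    16), (14, 21), (15, 22), (16, 23), (17, 24), (13, 17), (14, 18), (12, 13), (9, 12), (10,
    11), (3, 9), (5, 6), (6, 7), (7, 6), (8, 8), (9, 7), (10, 5), (12, 10), (14, 15), (17, 16),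
    (18, 15), (21, 14), (23, 11), (24, 12), (25, 1), (20, 18), (13, 11), (9, 18), (10, 17), (7,
    16), (2, 13), (3, 14), (5, 11), (6, 12), (7, 10), (9, 13), (10, 15), (13, 14), (15, 11),
    (16, 12), (17, 11), (18, 10), (20, 15), (23, 16), (24, 2), (15, 20), (17, 23), (18, 22),
    (14, 16), (12, 18), (6, 23), (7, 22), (8, 21), (1, 17), (2, 18), (3, 19), (6, 18), (7, 17),
    (8, 20), (10, 23), (11, 22), (12, 24), (14, 19), (17, 18), (18, 20), (20, 23), (21, 24),
    (23, 3), (11, 11), (12, 12), (0, 13), (1, 14), (3, 11), (4, 10), (6, 13), (7, 16), (8, 15),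
    (11, 16), (12, 14), (14, 11), (15, 10), (17, 16), (18, 15), (21, 16), (22, 2), (22, 1), (24,
    1), (23, 2), (22, 3), (21, 23), (22, 22), (23, 4), (18, 19), (21, 18), (22, 3), (16, 12),
    (15, 16), (16, 14), (18, 11), (19, 10), (21, 2), (11, 22), (12, 23), (13, 24), (15, 18),
    (16, 19), (19, 18), (20, 3), (14, 22), (15, 23), (13, 18), (11, 10), (8, 19), (11, 18), (12,
    19), (15, 20), (17, 23), (18, 22), (19, 4), (18, 1), (17, 2), (16, 3), (14, 16), (15, 2),
    (10, 14), (12, 11), (13, 12), (14, 1), (6, 8), (7, 6), (8, 7), (5, 12), (4, 16), (5, 14),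
    (7, 11), (8, 9), (10, 6), (11, 7), (12, 8), (13, 0), (17, 1), (16, 2), (15, 3), (14, 2),
    (13, 1), (12, 4), (11, 3), (10, 2), (7, 17), (8, 18), (9, 3), (4, 22), (5, 23), (6, 21), (7,
    22), (8, 4), (7, 1), (5, 13), (6, 2), (3, 18), (4, 17), (5, 3), (1, 10), (3, 13), (4, 2),
    (0, 6), (1, 5), (3, 1), (2, 0), (1, 1), (0, 2)]
      [2, 3, 2, 1, 0, 1, 2, 3, 2, 1, 4, 3, 2, 3, 4, 1, 2, 3, 2, 1, 1, 2, 3, 2, 1, 0, 1, 2, 3, 2,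
      1, 4, 3, 2, 3, 4, 1, 2, 3, 2, 1, 1, 3, 2, 1, 1, 2, 3, 2, 1, 4, 3, 2, 3, 4, 1, 2, 3, 2, 1,
      0, 1, 2, 3, 2, 1, 1, 2, 3, 2, 1, 4, 3, 2, 3, 4, 1, 2, 3, 2, 1, 0, 1, 2] = [] := by
  decide +kernel

theorem cert_e4 : run [(19, 1), (18, 2), (17, 3), (14, 22), (15, 23), (16, 4), (13, 18), (9,
    12), (10, 11), (11, 10), (13, 15), (16, 2), (12, 11), (8, 16), (9, 15), (12, 14), (14, 11),
    (15, 1), (14, 17), (15, 18), (13, 13), (3, 9), (5, 6), (6, 7), (7, 8), (8, 7), (9, 6), (10,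
    7), (11, 5), (13, 10), (15, 15), (18, 2), (14, 11), (10, 18), (11, 17), (2, 13), (3, 14),
    (5, 11), (6, 12), (7, 11), (8, 10), (10, 13), (11, 15), (14, 14), (16, 11), (17, 1), (16,
    20), (18, 23), (15, 16), (13, 18), (5, 20), (7, 23), (8, 22), (9, 21), (4, 16), (1, 17), (2,
    18), (0, 21), (1, 22), (2, 24), (4, 19), (7, 18), (8, 17), (9, 20), (11, 23), (12, 22), (13,
    24), (15, 19), (18, 20), (20, 4), (24, 1), (23, 2), (22, 3), (21, 2), (20, 1), (19, 17),
    (20, 18), (21, 19), (24, 18), (25, 20), (27, 23), (17, 16), (18, 13), (19, 14), (21, 11),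
    (22, 10), (24, 16), (14, 23), (15, 24), (17, 17), (18, 18), (19, 19), (22, 18), (16, 21),
    (17, 22), (18, 23), (15, 17), (16, 18), (14, 13), (12, 11), (8, 8), (9, 7), (10, 6), (11,
    7), (12, 5), (14, 10), (11, 18), (12, 17), (7, 12), (8, 11), (9, 10), (11, 13), (6, 16), (3,
    23), (4, 24), (6, 19), (9, 18), (10, 17), (11, 19), (14, 18), (15, 19), (18, 20), (20, 23),
    (21, 22), (22, 24), (24, 19), (27, 20), (29, 4), (28, 18), (26, 16), (21, 11), (22, 12),
    (17, 16), (18, 15), (21, 16), (22, 14), (24, 11), (25, 12), (26, 10), (21, 22), (22, 23),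
    (23, 24), (20, 18), (13, 14), (15, 11), (16, 12), (17, 11), (18, 10), (20, 15), (23, 16),
    (15, 20), (17, 23), (18, 22), (14, 16), (12, 18), (5, 23), (2, 19), (5, 20), (7, 23), (8,
    22), (9, 21), (10, 23), (11, 22), (12, 24), (14, 19), (17, 18), (18, 20), (20, 23), (21,
    24), (23, 19), (26, 18), (27, 19), (30, 3), (29, 2), (25, 14), (27, 11), (28, 1), (30, 1),
    (29, 2), (27, 18), (28, 3), (25, 10), (27, 2), (26, 1), (22, 23), (19, 19), (22, 20), (24,
    23), (25, 4), (21, 16), (18, 23), (19, 24), (21, 19), (24, 3), (23, 2), (22, 3), (20, 23),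
    (21, 4), (16, 14), (18, 11), (15, 18), (11, 11), (12, 12), (13, 10), (15, 15), (18, 14),
    (20, 1), (19, 2), (17, 18), (18, 3), (14, 11), (15, 10), (17, 2), (16, 1), (9, 6), (10, 7),
    (11, 8), (12, 6), (13, 7), (14, 6), (15, 0), (15, 1), (14, 2), (13, 3), (12, 2), (7, 14),
    (9, 11), (10, 12), (11, 1), (10, 4), (9, 3), (8, 2), (6, 18), (7, 3), (5, 22), (6, 4), (5,
    1), (4, 2), (3, 3), (2, 2), (1, 1), (0, 0)]
      [4, 3, 2, 1, 0, 1, 2, 3, 2, 1, 4, 3, 2, 3, 4, 1, 2, 3, 2, 1, 1, 2, 3, 4, 3, 2, 1, 0, 1, 2,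
      3, 2, 1, 4, 3, 2, 3, 4, 1, 2, 3, 2, 1, 1, 2, 3, 2, 1, 0, 1, 2, 3, 2, 1, 4, 3, 2, 3, 4, 1,
      2, 3, 2, 1, 1, 2, 1, 1, 2, 3, 2, 1, 4, 3, 2, 3, 4, 1, 2, 3, 2, 1, 0, 1, 1, 2, 3, 2, 1, 4,
      3, 2, 3, 4, 1, 2, 3, 2, 1, 0] = [] := by
  decide +kernel

/-! The four basic translations. -/

def x1 : W5 := v 0 * sg5 * tu5 * sg5
def x2 : W5 := v 1 * x1 * v 1
def x3 : W5 := v 2 * x2 * v 2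
def x4 : W5 := v 3 * x3 * v 3

def θ5 : W5 := sg5 * tu5 * sg5

theorem v_sq_assoc (i : Fin 5) (y : W5) : v i * (v i * y) = y := by
  rw [← mul_assoc, v_sq, one_mul]

theorem sg_inv : sg5⁻¹ = sg5 := by simp only [sg5, mul_inv_rev, v_inv, mul_assoc]
theorem tu_inv : tu5⁻¹ = tu5 := by simp only [tu5, mul_inv_rev, v_inv, mul_assoc]

theorem c1 : v 2 * x1 * v 2 = x1 := by
  have h := run_one cert_c1
  rw [← mul_inv_eq_one, ← h]
  simp only [x1, ev, List.map_cons, List.map_nil, List.prod_cons, List.prod_nil, mul_one, gn,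
    mul_inv_rev, sg5, tu5, v_inv, mul_assoc]

theorem d1 : v 3 * x1 * v 3 = x1 := by
  have h := run_one cert_d1
  rw [← mul_inv_eq_one, ← h]
  simp only [x1, ev, List.map_cons, List.map_nil, List.prod_cons, List.prod_nil, mul_one, gn,
    mul_inv_rev, sg5, tu5, v_inv, mul_assoc]

theorem e1 : v 4 * x1 * v 4 = x1 := by
  have h := run_one cert_e1
  rw [← mul_inv_eq_one, ← h]
  simp only [x1, ev, List.map_cons, List.map_nil, List.prod_cons, List.prod_nil, mul_one, gn,
    mul_inv_rev, sg5, tu5, v_inv, mul_assoc]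

theorem a1 : v 0 * x1 * v 0 = x1⁻¹ := by
  simp only [x1, mul_inv_rev, sg_inv, tu_inv, v_inv, ← mul_assoc, v_sq, one_mul]

theorem a2 : v 0 * x2 * v 0 = x2 * x1⁻¹ := by
  have h := run_one cert_a2
  rw [← mul_inv_eq_one, ← h]
  simp only [x2, x1, ev, List.map_cons, List.map_nil, List.prod_cons, List.prod_nil, mul_one, gn,
    mul_inv_rev, inv_inv, sg5, tu5, v_inv, mul_assoc]

theorem comm12 : Commute x1 x2 := by
  have h := run_one cert_comm
  show x1 * x2 = x2 * x1
  rw [← mul_inv_eq_one, ← h]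
  simp only [x2, x1, ev, List.map_cons, List.map_nil, List.prod_cons, List.prod_nil, mul_one, gn,
    mul_inv_rev, inv_inv, sg5, tu5, v_inv, mul_assoc]

theorem c4 : v 2 * x4 * v 2 = x3 * x4 * x2⁻¹ := by
  have h := run_one cert_c4
  rw [← mul_inv_eq_one, ← h]
  simp only [x4, x3, x2, x1, ev, List.map_cons, List.map_nil, List.prod_cons, List.prod_nil,
    mul_one, gn, mul_inv_rev, inv_inv, sg5, tu5, v_inv, mul_assoc]

theorem e4 : v 4 * x4 * v 4 = x1 * x2 * x3⁻¹ * x4⁻¹ := by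
  have h := run_one cert_e4
  rw [← mul_inv_eq_one, ← h]
  simp only [x4, x3, x2, x1, ev, List.map_cons, List.map_nil, List.prod_cons, List.prod_nil,
    mul_one, gn, mul_inv_rev, inv_inv, sg5, tu5, v_inv, mul_assoc]

/-- Conjugation by an involutive generator. -/
def cj (i : Fin 5) : W5 →* W5 := (MulAut.conj (v i)).toMonoidHom

theorem cj_apply (i : Fin 5) (y : W5) : cj i y = v i * y * v i := by
  simp [cj, v_inv]

theorem cj_cj (i : Fin 5) (y : W5) : cj i (cj i y) = y := by
  simp only [cj_apply, ← mul_assoc, v_sq, one_mul]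
  rw [mul_assoc, v_sq, mul_one]

theorem cj2 {i j : Fin 5} (h : cox5 i j = 2) (y : W5) : cj i (cj j y) = cj j (cj i y) := by
  have h1 := br2 h
  simp only [cj_apply]
  calc v i * (v j * y * v j) * v i = (v i * v j) * y * (v j * v i) := by simp only [mul_assoc]
    _ = (v j * v i) * y * (v i * v j) := by rw [h1]
    _ = _ := by simp only [mul_assoc]

theorem cj3 {i j : Fin 5} (h : cox5 i j = 3) (y : W5) :
    cj i (cj j (cj i y)) = cj j (cj i (cj j y)) := by
  have h1 := br3 h
  simp only [cj_apply]
  calc v i * (v j * (v i * y * v i) * v j) * v i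
      = (v i * (v j * v i)) * y * (v i * (v j * v i)) := by simp only [mul_assoc]
    _ = (v j * (v i * v j)) * y * (v j * (v i * v j)) := by rw [h1]
    _ = _ := by simp only [mul_assoc]

theorem b1' : cj 1 x1 = x2 := cj_apply _ _
theorem c2' : cj 2 x2 = x3 := cj_apply _ _
theorem d3' : cj 3 x3 = x4 := cj_apply _ _
theorem b2' : cj 1 x2 = x1 := by rw [← b1', cj_cj]
theorem c3' : cj 2 x3 = x2 := by rw [← c2', cj_cj]
theorem d4' : cj 3 x4 = x3 := by rw [← d3', cj_cj]
theorem a1' : cj 0 x1 = x1⁻¹ := by rw [cj_apply, a1]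
theorem c1' : cj 2 x1 = x1 := by rw [cj_apply, c1]
theorem d1' : cj 3 x1 = x1 := by rw [cj_apply, d1]
theorem e1' : cj 4 x1 = x1 := by rw [cj_apply, e1]
theorem a2' : cj 0 x2 = x2 * x1⁻¹ := by rw [cj_apply, a2]
theorem c4' : cj 2 x4 = x3 * x4 * x2⁻¹ := by rw [cj_apply, c4]
theorem e4' : cj 4 x4 = x1 * x2 * x3⁻¹ * x4⁻¹ := by rw [cj_apply, e4]
theorem d2' : cj 3 x2 = x2 := by rw [← b1', cj2 (by decide), d1']
theorem e2' : cj 4 x2 = x2 := by rw [← b1', cj2 (by decide), e1']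
theorem b3' : cj 1 x3 = x3 := by rw [← c2', ← b1', cj3 (by decide), c1']
theorem e3' : cj 4 x3 = x3 := by rw [← c2', cj2 (by decide), e2']
theorem a3' : cj 0 x3 = x3 * x1⁻¹ := by
  rw [← c2', cj2 (by decide), a2', map_mul, map_inv, c1']
theorem a4' : cj 0 x4 = x4 * x1⁻¹ := by
  rw [← d3', cj2 (by decide), a3', map_mul, map_inv, d1']
theorem b4' : cj 1 x4 = x4 := by rw [← d3', cj2 (by decide), b3']

theorem comm13 : Commute x1 x3 := by
  have h := comm12.map (cj 2)
  rwa [c1', c2'] at h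
theorem comm14 : Commute x1 x4 := by
  have h := comm13.map (cj 3)
  rwa [d1', d3'] at h
theorem comm23 : Commute x2 x3 := by
  have h := comm13.map (cj 1)
  rwa [b1', b3'] at h
theorem comm24 : Commute x2 x4 := by
  have h := comm23.map (cj 3)
  rwa [d2', d3'] at h
theorem comm34 : Commute x3 x4 := by
  have h := comm24.map (cj 2)
  rw [c2', c4'] at h
  have h2 : Commute x3 (x3⁻¹ * (x3 * x4 * x2⁻¹) * x2) :=
    (((Commute.refl x3).inv_right).mul_right h).mul_right comm23.symm
  have h3 : x3⁻¹ * (x3 * x4 * x2⁻¹) * x2 = x4 := by group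
  rwa [h3] at h2

def P (k : ℤ × ℤ × ℤ × ℤ) : W5 := x1 ^ k.1 * x2 ^ k.2.1 * x3 ^ k.2.2.1 * x4 ^ k.2.2.2

theorem P_add (k l : ℤ × ℤ × ℤ × ℤ) : P (k + l) = P k * P l := by
  obtain ⟨a, b, c, d⟩ := k
  obtain ⟨a', b', c', d'⟩ := l
  simp only [P, Prod.mk_add_mk, zpow_add]
  have h4 : Commute (x4 ^ d) (x1 ^ a' * x2 ^ b' * x3 ^ c') :=
    ((comm14.symm.zpow_zpow _ _).mul_right (comm24.symm.zpow_zpow _ _)).mul_right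
      (comm34.symm.zpow_zpow _ _)
  have h3 : Commute (x3 ^ c) (x1 ^ a' * x2 ^ b') :=
    ((comm13.symm.zpow_zpow _ _).mul_right (comm23.symm.zpow_zpow _ _))
  have h2 : Commute (x2 ^ b) (x1 ^ a') := comm12.symm.zpow_zpow _ _
  rw [h4.mul_mul_mul_comm, h3.mul_mul_mul_comm, h2.mul_mul_mul_comm]

theorem P_zero : P 0 = 1 := by simp [P]

theorem P_neg (k : ℤ × ℤ × ℤ × ℤ) : P (-k) = (P k)⁻¹ := by
  apply eq_inv_of_mul_eq_one_left
  rw [← P_add, neg_add_cancel, P_zero]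

def Phom : Multiplicative (ℤ × ℤ × ℤ × ℤ) →* W5 where
  toFun k := P k.toAdd
  map_one' := P_zero
  map_mul' k l := P_add _ _

theorem P_zsmul (n : ℤ) (k : ℤ × ℤ × ℤ × ℤ) : P (n • k) = P k ^ n :=
  map_zpow Phom (Multiplicative.ofAdd k) n

theorem P1 : P (1, 0, 0, 0) = x1 := by simp [P]
theorem P2 : P (0, 1, 0, 0) = x2 := by simp [P]
theorem P3 : P (0, 0, 1, 0) = x3 := by simp [P]
theorem P4 : P (0, 0, 0, 1) = x4 := by simp [P]

theorem cj_range (i : Fin 5) (k : ℤ × ℤ × ℤ × ℤ) : ∃ l, cj i (P k) = P l := by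
  have key : ∀ m1 m2 m3 m4, cj i x1 = P m1 → cj i x2 = P m2 → cj i x3 = P m3 → cj i x4 = P m4 →
      ∃ l, cj i (P k) = P l := by
    intro m1 m2 m3 m4 h1 h2 h3 h4
    refine ⟨k.1 • m1 + k.2.1 • m2 + k.2.2.1 • m3 + k.2.2.2 • m4, ?_⟩
    simp only [P_add, P_zsmul, ← h1, ← h2, ← h3, ← h4]
    simp only [P, map_mul, map_zpow]
  fin_cases i
  · refine key (-(1, 0, 0, 0)) ((0, 1, 0, 0) + -(1, 0, 0, 0)) ((0, 0, 1, 0) + -(1, 0, 0, 0))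
      ((0, 0, 0, 1) + -(1, 0, 0, 0)) ?_ ?_ ?_ ?_ <;>
      simp only [P_add, P_neg, P1, P2, P3, P4]
    exacts [a1', a2', a3', a4']
  · exact key (0, 1, 0, 0) (1, 0, 0, 0) (0, 0, 1, 0) (0, 0, 0, 1) (b1'.trans P2.symm)
      (b2'.trans P1.symm) (b3'.trans P3.symm) (b4'.trans P4.symm)
  · refine key (1, 0, 0, 0) (0, 0, 1, 0) (0, 1, 0, 0) ((0, 0, 1, 0) + (0, 0, 0, 1) + -(0, 1, 0, 0))
      (c1'.trans P1.symm) (c2'.trans P3.symm) (c3'.trans P2.symm) ?_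
    simp only [P_add, P_neg, P1, P2, P3, P4]
    exact c4'
  · exact key (1, 0, 0, 0) (0, 1, 0, 0) (0, 0, 0, 1) (0, 0, 1, 0) (d1'.trans P1.symm)
      (d2'.trans P2.symm) (d3'.trans P4.symm) (d4'.trans P3.symm)
  · refine key (1, 0, 0, 0) (0, 1, 0, 0) (0, 0, 1, 0)
      ((1, 0, 0, 0) + (0, 1, 0, 0) + -(0, 0, 1, 0) + -(0, 0, 0, 1))
      (e1'.trans P1.symm) (e2'.trans P2.symm) (e3'.trans P3.symm) ?_
    simp only [P_add, P_neg, P1, P2, P3, P4]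
    exact e4'

theorem v_closure : Subgroup.closure (Set.range v) = (⊤ : Subgroup W5) :=
  PresentedGroup.closure_range_of rels5

theorem conj_range (w : W5) : ∀ k, ∃ l, w * P k * w⁻¹ = P l := by
  have hw : w ∈ Subgroup.closure (Set.range v) := by rw [v_closure]; trivial
  have hv : ∀ (i : Fin 5) k, ∃ l, v i * P k * (v i)⁻¹ = P l := by
    intro i k
    rw [v_inv, ← cj_apply]
    exact cj_range i k
  induction hw using Subgroup.closure_induction'' with
  | mem x hx =>
    obtain ⟨i, rfl⟩ := hx
    exact hv i
  | inv_mem x hx =>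
    obtain ⟨i, rfl⟩ := hx
    rw [v_inv]
    exact hv i
  | one => exact fun k => ⟨k, by simp⟩
  | mul x y _ _ hx hy =>
    intro k
    obtain ⟨l, hl⟩ := hy k
    obtain ⟨m, hm⟩ := hx l
    refine ⟨m, ?_⟩
    rw [← hm, ← hl]
    group

/-- The subgroup of `s`-th multiples of translations. -/
def S (s : ℕ) : Subgroup W5 where
  carrier := {w | ∃ k, w = P ((s : ℤ) • k)}
  one_mem' := ⟨0, by rw [smul_zero, P_zero]⟩
  mul_mem' := by
    rintro _ _ ⟨k, rfl⟩ ⟨l, rfl⟩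
    exact ⟨k + l, by rw [smul_add, P_add]⟩
  inv_mem' := by
    rintro _ ⟨k, rfl⟩
    exact ⟨-k, by rw [smul_neg, P_neg]⟩

theorem S_normal (s : ℕ) : (S s).Normal := by
  constructor
  rintro _ ⟨k, rfl⟩ g
  obtain ⟨l, hl⟩ := conj_range g k
  refine ⟨l, ?_⟩
  rw [P_zsmul, P_zsmul, ← hl, conj_zpow]

theorem nc_eq (s : ℕ) :
    Subgroup.normalClosure ({(v 0 * sg5 * tu5 * sg5) ^ s} : Set W5) = S s := by
  apply le_antisymm
  · haveI := S_normal s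
    apply Subgroup.normalClosure_le_normal
    rintro _ rfl
    refine ⟨(1, 0, 0, 0), ?_⟩
    rw [P_zsmul, P1, zpow_natCast]
    rfl
  · set N := Subgroup.normalClosure ({(v 0 * sg5 * tu5 * sg5) ^ s} : Set W5) with hN
    have h1 : x1 ^ s ∈ N := Subgroup.subset_normalClosure rfl
    have hc : ∀ i y, y ^ s ∈ N → cj i y ^ s ∈ N := by
      intro i y hy
      rw [← map_pow, cj_apply]
      have h := (Subgroup.normalClosure_normal (s := {(v 0 * sg5 * tu5 * sg5) ^ s})).conj_mem
        _ hy (v i)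
      rwa [v_inv] at h
    have h2 : x2 ^ s ∈ N := by rw [← b1']; exact hc _ _ h1
    have h3 : x3 ^ s ∈ N := by rw [← c2']; exact hc _ _ h2
    have h4 : x4 ^ s ∈ N := by rw [← d3']; exact hc _ _ h3
    rintro _ ⟨⟨a, b, c, d⟩, rfl⟩
    simp only [P, Prod.smul_mk, smul_eq_mul, zpow_mul, zpow_natCast]
    exact N.mul_mem (N.mul_mem (N.mul_mem (N.zpow_mem h1 _) (N.zpow_mem h2 _)) (N.zpow_mem h3 _))
      (N.zpow_mem h4 _)

/-! A faithful-enough affine action. -/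

def mkI (f : ℤ × ℤ × ℤ × ℤ → ℤ × ℤ × ℤ × ℤ) (h : Function.Involutive f) :
    Equiv.Perm (ℤ × ℤ × ℤ × ℤ) := h.toPerm f

def act : Fin 5 → (ℤ × ℤ × ℤ × ℤ → ℤ × ℤ × ℤ × ℤ)
  | 0 => fun p => (1 - p.1 - p.2.1 - p.2.2.1 - p.2.2.2, p.2.1, p.2.2.1, p.2.2.2)
  | 1 => fun p => (p.2.1, p.1, p.2.2.1, p.2.2.2)
  | 2 => fun p => (p.1, p.2.2.1 - p.2.2.2, p.2.1 + p.2.2.2, p.2.2.2)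
  | 3 => fun p => (p.1, p.2.1, p.2.2.2, p.2.2.1)
  | 4 => fun p => (p.1 + p.2.2.2, p.2.1 + p.2.2.2, p.2.2.1 - p.2.2.2, - p.2.2.2)

theorem act_inv (i : Fin 5) : Function.Involutive (act i) := by
  rintro ⟨a, b, c, d⟩
  fin_cases i <;> simp [act] <;> ring

def actP (i : Fin 5) : Equiv.Perm (ℤ × ℤ × ℤ × ℤ) := (act_inv i).toPerm (act i)

theorem actP_apply (i : Fin 5) (p) : actP i p = act i p := rfl

theorem act_rel : ∀ r ∈ rels5, FreeGroup.lift actP r = 1 := by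
  rintro _ ⟨⟨i, j⟩, rfl⟩
  simp only [map_pow, map_mul, FreeGroup.lift_apply_of]
  apply Equiv.ext
  rintro ⟨a, b, c, d⟩
  fin_cases i <;> fin_cases j <;>
    simp [cox5, pow_succ, Equiv.Perm.mul_apply, actP_apply, act] <;> grind

def ρ : W5 →* Equiv.Perm (ℤ × ℤ × ℤ × ℤ) := PresentedGroup.toGroup act_rel

theorem ρ_v (i : Fin 5) : ρ (v i) = actP i := PresentedGroup.toGroup.of act_rel

theorem ρ1 : ρ x1 = Equiv.addRight (1, 0, 0, 0) := by
  apply Equiv.ext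
  rintro ⟨a, b, c, d⟩
  simp [x1, sg5, tu5, ρ_v, Equiv.Perm.mul_apply, actP_apply, act]
  try grind

theorem ρ2 : ρ x2 = Equiv.addRight (0, 1, 0, 0) := by
  apply Equiv.ext
  rintro ⟨a, b, c, d⟩
  simp [x2, ρ1, ρ_v, Equiv.Perm.mul_apply, actP_apply, act]

theorem ρ3 : ρ x3 = Equiv.addRight (0, 0, 1, 0) := by
  apply Equiv.ext
  rintro ⟨a, b, c, d⟩
  simp [x3, ρ2, ρ_v, Equiv.Perm.mul_apply, actP_apply, act]
  try grind

theorem ρ4 : ρ x4 = Equiv.addRight (0, 0, 0, 1) := by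
  apply Equiv.ext
  rintro ⟨a, b, c, d⟩
  simp [x4, ρ3, ρ_v, Equiv.Perm.mul_apply, actP_apply, act]

theorem zpow_addR (q : ℤ × ℤ × ℤ × ℤ) (n : ℤ) :
    (Equiv.addRight q : Equiv.Perm (ℤ × ℤ × ℤ × ℤ)) ^ n = Equiv.addRight (n • q) := by
  induction n with
  | zero => ext <;> simp
  | succ n ih =>
    rw [zpow_add_one, ih]
    apply Equiv.ext
    intro p
    simp only [Equiv.Perm.mul_apply, Equiv.coe_addRight, add_zsmul, one_zsmul]
    abel
  | pred n ih =>
    rw [zpow_sub_one, ih]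
    apply Equiv.ext
    intro p
    simp only [Equiv.Perm.mul_apply, Equiv.coe_addRight, sub_zsmul, one_zsmul, Equiv.Perm.inv_def,
      Equiv.addRight_symm]
    abel

theorem ρP (k : ℤ × ℤ × ℤ × ℤ) : ρ (P k) 0 = k := by
  obtain ⟨a, b, c, d⟩ := k
  simp [P, ρ1, ρ2, ρ3, ρ4, Equiv.Perm.mul_apply, zpow_addR]

theorem P_inj {k l : ℤ × ℤ × ℤ × ℤ} (h : P k = P l) : k = l := by
  rw [← ρP k, h, ρP]

theorem S_inf (s t : ℕ) : S s ⊓ S t = S (Nat.lcm s t) := by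
  ext w
  constructor
  · rintro ⟨⟨⟨a, b, c, d⟩, rfl⟩, ⟨⟨a', b', c', d'⟩, h⟩⟩
    have h := P_inj h
    simp only [Prod.smul_mk, smul_eq_mul, Prod.mk.injEq] at h
    obtain ⟨ha, hb, hc, hd⟩ := h
    have key : ∀ m n : ℤ, (s : ℤ) * m = t * n → ∃ q : ℤ, (s : ℤ) * m = (Nat.lcm s t : ℕ) * q := by
      intro m n h
      have : ((Nat.lcm s t : ℕ) : ℤ) ∣ s * m := by
        have h1 : (s : ℤ) ∣ s * m := dvd_mul_right _ _
        have h2 : (t : ℤ) ∣ s * m := h ▸ dvd_mul_right _ _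
        rw [Int.natCast_dvd] at h1 h2 ⊢
        exact Nat.lcm_dvd h1 h2
      exact this
    obtain ⟨qa, ha⟩ := key _ _ ha
    obtain ⟨qb, hb⟩ := key _ _ hb
    obtain ⟨qc, hc⟩ := key _ _ hc
    obtain ⟨qd, hd⟩ := key _ _ hd
    refine ⟨(qa, qb, qc, qd), ?_⟩
    simp only [Prod.smul_mk, smul_eq_mul, ha, hb, hc, hd]
  · rintro ⟨k, rfl⟩
    obtain ⟨p, hp⟩ := Nat.dvd_lcm_left s t
    obtain ⟨q, hq⟩ := Nat.dvd_lcm_right s t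
    constructor
    · refine ⟨(p : ℤ) • k, ?_⟩
      rw [smul_smul, ← Nat.cast_mul, ← hp]
    · refine ⟨(q : ℤ) • k, ?_⟩
      rw [smul_smul, ← Nat.cast_mul, ← hq]

/-- The mix of [3,3,4,3]_{(s,0,0,0)} and [3,3,4,3]_{(t,0,0,0)} is
[3,3,4,3]_{(l,0,0,0)} where l = lcm(s,t). -/
theorem stmt_17 (s t : ℕ) (hs : 2 ≤ s) (ht : 2 ≤ t) :
    Nonempty
      ((Subgroup.closure
          (Set.range fun i : Fin 5 => ((piH s (v i), piH t (v i)) : Hq s × Hq t))) ≃*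
        Hq (Nat.lcm s t)) := by
  have hker : ((piH s).prod (piH t)).ker =
      Subgroup.normalClosure ({(v 0 * sg5 * tu5 * sg5) ^ (Nat.lcm s t)} : Set W5) := by
    have hk : ∀ n, (piH n).ker = S n := fun n => (QuotientGroup.ker_mk' _).trans (nc_eq n)
    rw [MonoidHom.ker_prod, hk, hk, S_inf]
    exact (nc_eq _).symm
  have hrange : ((piH s).prod (piH t)).range = Subgroup.closure
      (Set.range fun i : Fin 5 => ((piH s (v i), piH t (v i)) : Hq s × Hq t)) := by
    rw [MonoidHom.range_eq_map, ← v_closure, MonoidHom.map_closure, ← Set.range_comp]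
    rfl
  exact ⟨((QuotientGroup.quotientMulEquivOfEq hker).symm.trans
    ((QuotientGroup.quotientKerEquivRange _).trans (MulEquiv.subgroupCongr hrange))).symm⟩
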